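/- Fix integers n ≥ 1, d ≥ 2 and a real a > 0. There exists an online prediction strategy (mAAR(a)) whose predictions always lie in the probability simplex Δ ⊂ ℝ^d and such that for every X > 0, every positive integer T, every sequence of signals x_1, …, x_T ∈ ℝ^n with ‖x_t‖_∞ ≤ X for all t, every sequence of outcomes y_1, …, y_T ∈ Δ, and every α ∈ ℝ^{n(d−1)}: Σ_{t=1}^T λ(y_t, γ_t) ≤ Σ_{t=1}^T λ(y_t, ξ(α, x_t)) + a‖α‖_2² + (n(d−2)/2)·ln(T X²/a + 1) + (n/2)·ln(T X² d/a + 1), where γ_t is the strategy's prediction at step t. -/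

import Mathlib

/-!
The strategy is the Aggregating Algorithm at learning rate `1` with a Gaussian prior on the linear
experts, and a substitution function that maps generalised predictions into the simplex.

*Mixability.*  Write `e_k` for the vertices of the simplex.  For every `p` in the simplex and every
`ξ ∈ ℝ^d`, Hoeffding's lemma gives `∑ p_k exp (λ(e_k, p) - λ(e_k, ξ)) ≤ 1`
(`sum_exp_brier_le_one`).  Integrating over a mixture of experts shows that the generalised
prediction `G_k = -log E exp (-λ(e_k, ξ))` satisfies `∑ p_k G_k ≥ 1 - ‖p‖²` for all `p`.  Then the
minimiser `γ` of `‖p‖² + ∑ p_k G_k` over the simplex has `λ(e_k, γ) ≤ G_k` for all `k`, by its first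
order condition (`exists_substitution`).  Loss differences are affine in the outcome, so convexity
of `exp` extends this from vertices to all outcomes in the simplex (`mixability`).

*Regret.*  Consequently `exp (learner's loss) * W_T ≤ W_0`, where
`W_t = ∫ exp (-a ‖α‖² - L_t(α)) dα`.  It remains to bound `W_T` from below by
`exp (-a ‖α‖² - L_T(α))` times a Gaussian integral (`total_weight_ge`).  The loss is quadratic with
quadratic part `∑_t (‖β x_t‖² + (∑_i (β x_t)_i)²)` for a perturbation `β`; averaging over random
signs of the columns of `β` removes the linear and off-diagonal terms, and Jensen's inequality
for `exp` does the rest.  In a rotated basis (`exists_rotation`) the form `‖w‖² + (∑ w_i)²` is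
diagonal with eigenvalues `1` (`d - 2` times) and `d` (once), which yields the two logarithms.
-/

open Finset

noncomputable section

/-- Brier loss: squared Euclidean distance between prediction and outcome. -/
def brier {d : ℕ} (y γ : Fin d → ℝ) : ℝ := ∑ i, (γ i - y i) ^ 2

/-- The probability simplex in ℝ^d. -/
def probSimplex (d : ℕ) : Set (Fin d → ℝ) :=
  {y | (∀ i, 0 ≤ y i) ∧ ∑ i, y i = 1}

/-- Linear expert prediction: ξ_i = 1/d + α_i'x for i < d-1, and the last
component is one minus the sum of the others. -/
def expertPred (n d : ℕ) (α : Fin (d - 1) → Fin n → ℝ) (x : Fin n → ℝ) : Fin d → ℝ :=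
  fun i =>
    if h : (i : ℕ) < d - 1 then (1 : ℝ) / d + ∑ j, α ⟨i, h⟩ j * x j
    else 1 - ∑ k : Fin (d - 1), ((1 : ℝ) / d + ∑ j, α k j * x j)


/-! ### Mixability of the Brier game -/

open MeasureTheory in
/-- Hoeffding's lemma for a finitely supported probability vector `p`.  Since the range of `v` is at
most `√2 ‖v‖₂`, the sub-Gaussian exponent `range² / 2` is bounded by `‖v‖₂²`. -/
lemma hoeffding_simplex {d : ℕ} {p : Fin d → ℝ} (hp : p ∈ probSimplex d) (v : Fin d → ℝ) :
    ∑ k, p k * Real.exp (2 * (v k - ∑ i, p i * v i)) ≤ Real.exp (∑ i, v i ^ 2) := by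
  obtain ⟨hp0, hp1⟩ := hp
  set μ : Measure (Fin d) := ∑ k, ENNReal.ofReal (p k) • Measure.dirac k with hμ
  have hint : ∀ f : Fin d → ℝ, ∫ k, f k ∂μ = ∑ k, p k * f k := by
    intro f
    rw [hμ, integral_finsetSum_measure (fun i _ => Integrable.of_finite.smul_measure (by simp))]
    refine Finset.sum_congr rfl fun k _ => ?_
    rw [integral_smul_measure, integral_dirac, ENNReal.toReal_ofReal (hp0 k), smul_eq_mul]
  have : IsProbabilityMeasure μ := by
    constructor
    simp only [hμ, Measure.coe_finsetSum, Finset.sum_apply, Measure.smul_apply, measure_univ,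
      smul_eq_mul, mul_one]
    rw [← ENNReal.ofReal_sum_of_nonneg (fun i _ => hp0 i), hp1, ENNReal.ofReal_one]
  have hne : (Finset.univ : Finset (Fin d)).Nonempty := by
    by_contra h
    rw [Finset.not_nonempty_iff_eq_empty] at h
    simp [h] at hp1
  obtain ⟨i, -, hi⟩ := Finset.exists_max_image Finset.univ v hne
  obtain ⟨j, -, hj⟩ := Finset.exists_min_image Finset.univ v hne
  have key := (ProbabilityTheory.hasSubgaussianMGF_of_mem_Icc (μ := μ) (X := v) (a := v j)
    (b := v i) (measurable_of_finite _).aemeasurable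
    (Filter.Eventually.of_forall fun k => ⟨hj k (mem_univ _), hi k (mem_univ _)⟩)).mgf_le 2
  rw [ProbabilityTheory.mgf, hint, hint] at key
  refine key.trans (Real.exp_le_exp.mpr ?_)
  have hr : (v i - v j) ^ 2 ≤ 2 * ∑ k, v k ^ 2 := by
    by_cases hij : i = j
    · subst hij
      have : 0 ≤ ∑ k, v k ^ 2 := Finset.sum_nonneg fun _ _ => sq_nonneg _
      simpa using this
    · have h1 : v i ^ 2 + v j ^ 2 ≤ ∑ k, v k ^ 2 := by
        rw [← Finset.sum_pair hij (f := fun k => v k ^ 2)]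
        exact Finset.sum_le_sum_of_subset_of_nonneg (subset_univ _) fun _ _ _ => sq_nonneg _
      nlinarith [sq_nonneg (v i + v j)]
  have hn : ((((‖v i - v j‖₊ / 2) ^ 2 : NNReal)) : ℝ) = (v i - v j) ^ 2 / 4 := by
    push_cast
    rw [div_pow, Real.norm_eq_abs, sq_abs]
    norm_num
  rw [hn]
  linarith

/-- The vertices of the simplex, i.e. the pure outcomes. -/
def vertex {d : ℕ} (k : Fin d) : Fin d → ℝ := Pi.single k 1

lemma vertex_mem {d : ℕ} (k : Fin d) : vertex k ∈ probSimplex d := by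
  refine ⟨fun i => ?_, by simp [vertex]⟩
  by_cases h : i = k
  · subst h; simp [vertex]
  · simp [vertex, h]

lemma brier_vertex {d : ℕ} (k : Fin d) (γ : Fin d → ℝ) :
    brier (vertex k) γ = ∑ i, γ i ^ 2 - 2 * γ k + 1 := by
  have h : ∀ i, (γ i - vertex k i) ^ 2
      = γ i ^ 2 - 2 * (if i = k then γ i else 0) + (if i = k then 1 else 0) := by
    intro i
    by_cases h : i = k
    · subst h; simp [vertex]; ring
    · simp [vertex, h]
  simp only [brier, h, Finset.sum_add_distrib, Finset.sum_sub_distrib, ← Finset.mul_sum]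
  simp

/-- Loss differences are affine in the outcome, hence averages of those at the pure outcomes. -/
lemma brier_sub_brier {d : ℕ} {y : Fin d → ℝ} (hy : ∑ k, y k = 1) (γ ξ : Fin d → ℝ) :
    brier y γ - brier y ξ = ∑ k, y k * (brier (vertex k) γ - brier (vertex k) ξ) := by
  have h : ∀ δ : Fin d → ℝ, brier y δ = ∑ i, δ i ^ 2 - 2 * ∑ k, y k * δ k + ∑ k, y k ^ 2 := by
    intro δ
    simp only [brier, Finset.mul_sum, ← Finset.sum_sub_distrib, ← Finset.sum_add_distrib]
    exact Finset.sum_congr rfl fun i _ => by ring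
  have h2 : ∑ k, y k * (brier (vertex k) γ - brier (vertex k) ξ)
      = (∑ k, y k) * (∑ i, γ i ^ 2 - ∑ i, ξ i ^ 2)
        - 2 * (∑ k, y k * γ k) + 2 * ∑ k, y k * ξ k := by
    simp only [brier_vertex]
    generalize ∑ i, γ i ^ 2 = P
    generalize ∑ i, ξ i ^ 2 = Q
    simp only [Finset.sum_mul, Finset.mul_sum, ← Finset.sum_sub_distrib, ← Finset.sum_add_distrib]
    exact Finset.sum_congr rfl fun i _ => by ring
  rw [h2, h, h, hy]
  ring

/-- Pointwise form of the mixability of the Brier game at learning rate `1`: the `p`-average of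
the exponentiated advantages of `ξ` over `p` is at most `1`, even for `ξ` outside the simplex. -/
lemma sum_exp_brier_le_one {d : ℕ} {p : Fin d → ℝ} (hp : p ∈ probSimplex d) (ξ : Fin d → ℝ) :
    ∑ k, p k * Real.exp (brier (vertex k) p - brier (vertex k) ξ) ≤ 1 := by
  set v : Fin d → ℝ := fun i => ξ i - p i with hv
  have h : ∀ k, brier (vertex k) p - brier (vertex k) ξ
      = 2 * (v k - ∑ i, p i * v i) - ∑ i, v i ^ 2 := by
    intro k
    have : ∑ i, ξ i ^ 2 = ∑ i, p i ^ 2 + 2 * ∑ i, p i * v i + ∑ i, v i ^ 2 := by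
      simp only [Finset.mul_sum, ← Finset.sum_add_distrib]
      exact Finset.sum_congr rfl fun i _ => by simp only [hv]; ring
    rw [brier_vertex, brier_vertex, this]
    simp only [hv]
    ring
  simp only [h, Real.exp_sub _ (∑ i, v i ^ 2), ← mul_div_assoc, ← Finset.sum_div]
  rw [div_le_one (Real.exp_pos _)]
  exact hoeffding_simplex hp v

/-- A substitution function: the minimiser `p` of `‖p‖² + G · p` over the simplex suffers at most
`G k` on every pure outcome `k`, provided `G` dominates the entropy `1 - ‖p‖²` of the game. -/
lemma exists_substitution {d : ℕ} (hd : 0 < d) (G : Fin d → ℝ)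
    (hG : ∀ p ∈ probSimplex d, 1 - ∑ i, p i ^ 2 ≤ ∑ i, p i * G i) :
    ∃ γ ∈ probSimplex d, ∀ k, brier (vertex k) γ ≤ G k := by
  have hK : IsCompact (probSimplex d) := isCompact_stdSimplex ℝ (Fin d)
  obtain ⟨p, hp, hmin⟩ := hK.exists_isMinOn ⟨_, vertex_mem ⟨0, hd⟩⟩
    (f := fun p : Fin d → ℝ => ∑ i, (p i ^ 2 + p i * G i)) (by fun_prop)
  refine ⟨p, hp, fun k => ?_⟩
  set q : Fin d → ℝ := vertex k with hq
  have hqm : q ∈ probSimplex d := vertex_mem k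
  set B := ∑ i, (2 * p i + G i) * (q i - p i) with hB
  set C := ∑ i, (q i - p i) ^ 2 with hC
  have hCn : 0 ≤ C := Finset.sum_nonneg fun _ _ => sq_nonneg _
  have hvar : ∀ t : ℝ, 0 < t → t ≤ 1 → 0 ≤ B + t * C := by
    intro t ht ht1
    have hmem : (fun i => p i + t * (q i - p i)) ∈ probSimplex d := by
      refine ⟨fun i => ?_, ?_⟩
      · have := mul_nonneg ht.le (hqm.1 i)
        have := mul_nonneg (sub_nonneg.mpr ht1) (hp.1 i)
        dsimp only
        linarith
      · rw [Finset.sum_add_distrib, ← Finset.mul_sum, Finset.sum_sub_distrib, hp.2, hqm.2]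
        ring
    have h := hmin hmem
    simp only [Set.mem_ofPred_eq] at h
    have he : ∑ i, ((p i + t * (q i - p i)) ^ 2 + (p i + t * (q i - p i)) * G i)
        = ∑ i, (p i ^ 2 + p i * G i) + t * (B + t * C) := by
      simp only [hB, hC, Finset.mul_sum, ← Finset.sum_add_distrib]
      exact Finset.sum_congr rfl fun i _ => by ring
    rw [he] at h
    exact nonneg_of_mul_nonneg_right (by linarith) ht
  have hB0 : 0 ≤ B := by
    by_contra! hneg
    -- a step of length at most `-B / (C + 1)` would contradict minimality
    have ht : 0 < min 1 (-B / (C + 1)) := lt_min one_pos (div_pos (by linarith) (by linarith))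
    have h1 := hvar _ ht (min_le_left _ _)
    have h2 : min 1 (-B / (C + 1)) * (C + 1) ≤ -B := by
      rw [← le_div_iff₀ (by linarith)]
      exact min_le_right _ _
    nlinarith
  have hBe : B = 2 * p k + G k - 2 * ∑ i, p i ^ 2 - ∑ i, p i * G i := by
    have h1 : ∀ i, (2 * p i + G i) * (q i - p i)
        = (if i = k then 2 * p i + G i else 0) - 2 * p i ^ 2 - p i * G i := by
      intro i
      by_cases h : i = k
      · subst h; simp [hq, vertex]; ring
      · simp [hq, vertex, h]; ring
    rw [hB]
    simp only [h1, Finset.sum_sub_distrib, ← Finset.mul_sum]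
    simp
  have := hG p hp
  rw [brier_vertex]
  linarith

open MeasureTheory in
/-- Mixability of the Brier game for a continuum of generalised experts: if the expert `ω` has
weight `f ω` and predicts `ξ ω`, some `γ` in the simplex loses at most as much as the exponential
mixture of the experts, whatever the outcome in the simplex is. -/
lemma mixability {d : ℕ} (hd : 0 < d) {Ω : Type*} [MeasurableSpace Ω] (μ : Measure Ω)
    (f : Ω → ℝ) (ξ : Ω → Fin d → ℝ) (hf0 : ∀ ω, 0 < f ω) (hf : 0 < ∫ ω, f ω ∂μ)
    (hint : ∀ y, Integrable (fun ω => f ω * Real.exp (-brier y (ξ ω))) μ) :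
    ∃ γ ∈ probSimplex d, ∀ y ∈ probSimplex d,
      Real.exp (brier y γ) * ∫ ω, f ω * Real.exp (-brier y (ξ ω)) ∂μ ≤ ∫ ω, f ω ∂μ := by
  set Z := ∫ ω, f ω ∂μ with hZ
  have hfi : Integrable f μ := by
    by_contra h
    rw [hZ, integral_undef h] at hf
    exact hf.false
  have hμ : μ ≠ 0 := by
    rintro rfl
    simp [hZ] at hf
  set I : Fin d → ℝ := fun k => ∫ ω, f ω * Real.exp (-brier (vertex k) (ξ ω)) ∂μ with hI
  have hIpos : ∀ k, 0 < I k := by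
    intro k
    have hpos : ∀ ω, 0 < f ω * Real.exp (-brier (vertex k) (ξ ω)) :=
      fun ω => mul_pos (hf0 ω) (Real.exp_pos _)
    rw [hI]
    dsimp only
    rw [integral_pos_iff_support_of_nonneg (fun ω => (hpos ω).le) (hint _)]
    have : Function.support (fun ω => f ω * Real.exp (-brier (vertex k) (ξ ω))) = Set.univ := by
      ext ω
      simpa using (hpos ω).ne'
    rw [this]
    exact pos_iff_ne_zero.mpr (by simpa using hμ)
  have hcomb : ∀ (p c : Fin d → ℝ),
      ∫ ω, f ω * ∑ k, p k * Real.exp (c k - brier (vertex k) (ξ ω)) ∂μ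
        = ∑ k, p k * (Real.exp (c k) * I k) := by
    intro p c
    rw [hI]
    simp only [← integral_const_mul]
    rw [← integral_finsetSum]
    · refine integral_congr_ae (Filter.Eventually.of_forall fun ω => ?_)
      dsimp only
      rw [Finset.mul_sum]
      exact Finset.sum_congr rfl fun k _ => by rw [sub_eq_add_neg, Real.exp_add]; ring
    · exact fun k _ => ((hint _).const_mul _).const_mul _
  have hcombi : ∀ (p c : Fin d → ℝ), Integrable
      (fun ω => f ω * ∑ k, p k * Real.exp (c k - brier (vertex k) (ξ ω))) μ := by
    intro p c
    have : (fun ω => f ω * ∑ k, p k * Real.exp (c k - brier (vertex k) (ξ ω)))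
        = fun ω => ∑ k, p k * (Real.exp (c k) * (f ω * Real.exp (-brier (vertex k) (ξ ω)))) := by
      funext ω
      rw [Finset.mul_sum]
      exact Finset.sum_congr rfl fun k _ => by rw [sub_eq_add_neg, Real.exp_add]; ring
    rw [this]
    exact integrable_finsetSum _ fun k _ => ((hint _).const_mul _).const_mul _
  obtain ⟨γ, hγ, hγG⟩ := exists_substitution hd (fun k => -Real.log (I k / Z)) (by
    intro p hp
    have hle : ∑ k, p k * (Real.exp (brier (vertex k) p) * I k) ≤ Z := by
      rw [← hcomb]
      refine integral_mono (hcombi _ _) hfi fun ω => ?_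
      exact mul_le_of_le_one_right (hf0 ω).le (sum_exp_brier_le_one hp _)
    have hle2 : ∑ k, p k * (brier (vertex k) p + Real.log (I k / Z) + 1) ≤ 1 := by
      calc _ ≤ ∑ k, p k * (Real.exp (brier (vertex k) p) * I k) / Z := by
            refine Finset.sum_le_sum fun k _ => ?_
            rw [mul_div_assoc, mul_div_assoc]
            refine mul_le_mul_of_nonneg_left ?_ (hp.1 k)
            have := Real.add_one_le_exp (brier (vertex k) p + Real.log (I k / Z))
            rwa [Real.exp_add, Real.exp_log (div_pos (hIpos k) hf)] at this
        _ ≤ 1 := by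
            rw [← Finset.sum_div, div_le_one hf]
            exact hle
    have he : ∀ P : ℝ, ∑ k, p k * (P - 2 * p k + 1 + Real.log (I k / Z) + 1)
        = (∑ k, p k) * (P + 2) - 2 * ∑ i, p i ^ 2 - ∑ i, p i * -Real.log (I i / Z) := by
      intro P
      simp only [Finset.sum_mul, Finset.mul_sum, ← Finset.sum_sub_distrib]
      exact Finset.sum_congr rfl fun i _ => by ring
    simp only [brier_vertex] at hle2
    rw [he, hp.2] at hle2
    linarith)
  refine ⟨γ, hγ, fun y hy => ?_⟩
  have hone : ∀ k, Real.exp (brier (vertex k) γ) * I k ≤ Z := by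
    intro k
    have h := Real.exp_le_exp.mpr (hγG k)
    rw [Real.exp_neg, Real.exp_log (div_pos (hIpos k) hf), inv_div, le_div_iff₀ (hIpos k)] at h
    exact h
  calc Real.exp (brier y γ) * ∫ ω, f ω * Real.exp (-brier y (ξ ω)) ∂μ
      = ∫ ω, f ω * Real.exp (brier y γ - brier y (ξ ω)) ∂μ := by
        rw [← integral_const_mul]
        refine integral_congr_ae (Filter.Eventually.of_forall fun ω => ?_)
        dsimp only
        rw [sub_eq_add_neg, Real.exp_add]
        ring
    _ ≤ ∫ ω, f ω * ∑ k, y k * Real.exp (brier (vertex k) γ - brier (vertex k) (ξ ω)) ∂μ := by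
        refine integral_mono ?_ (hcombi _ _) fun ω => ?_
        · refine ((hint y).const_mul (Real.exp (brier y γ))).congr
            (Filter.Eventually.of_forall fun ω => ?_)
          dsimp only
          rw [sub_eq_add_neg, Real.exp_add]
          ring
        · refine mul_le_mul_of_nonneg_left ?_ (hf0 ω).le
          rw [brier_sub_brier hy.2]
          have := convexOn_exp.map_sum_le (t := Finset.univ) (w := y)
            (p := fun k => brier (vertex k) γ - brier (vertex k) (ξ ω))
            (fun i _ => hy.1 i) hy.2 (fun _ _ => Set.mem_univ _)
          simpa only [smul_eq_mul] using this
    _ = ∑ k, y k * (Real.exp (brier (vertex k) γ) * I k) := hcomb _ _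
    _ ≤ ∑ k, y k * Z :=
        Finset.sum_le_sum fun k _ => mul_le_mul_of_nonneg_left (hone k) (hy.1 k)
    _ = Z := by rw [← Finset.sum_mul, hy.2, one_mul]

/-! ### Diagonalisation -/

/-- In `ℝ^m` there is an orthogonal matrix `U`, one of whose columns is `(1, …, 1) / √m`.  It
diagonalises the quadratic form `‖w‖² + (∑ i, w i)²`, with eigenvalues `1` and, once, `m + 1`. -/
lemma exists_rotation {m : ℕ} (hm : 0 < m) :
    ∃ (U : Fin m → Fin m → ℝ) (k₀ : Fin m),
      (∀ v : Fin m → ℝ, ∑ i, (∑ k, U i k * v k) ^ 2 = ∑ k, v k ^ 2) ∧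
      (∀ v : Fin m → ℝ, (∑ i, ∑ k, U i k * v k) ^ 2 = m * v k₀ ^ 2) ∧
      ∀ w : Fin m → ℝ, ∃ v : Fin m → ℝ, ∀ i, ∑ k, U i k * v k = w i := by
  have hm' : (0 : ℝ) < m := by exact_mod_cast hm
  let k₀ : Fin m := ⟨0, hm⟩
  let u : EuclideanSpace ℝ (Fin m) := WithLp.toLp 2 fun _ => 1 / √(m : ℝ)
  have hu : ‖u‖ = 1 := by
    rw [EuclideanSpace.norm_eq, Real.sqrt_eq_one]
    simp [u, hm'.ne']
  have ho : Orthonormal ℝ (({k₀} : Set (Fin m)).domRestrict fun _ : Fin m => u) := by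
    refine ⟨fun i => hu, fun i j hij => ?_⟩
    exact absurd (Subsingleton.elim i j) hij
  obtain ⟨B, hB⟩ := ho.exists_orthonormalBasis_extension_of_card_eq (by simp)
  have hB0 : B k₀ = u := hB k₀ rfl
  have hlin : ∀ (v : Fin m → ℝ) (i : Fin m),
      ∑ k, B k i * v k = B.repr.symm (WithLp.toLp 2 v) i := by
    intro v i
    rw [← B.sum_repr_symm]
    simp [mul_comm]
  refine ⟨fun i k => B k i, k₀, fun v => ?_, fun v => ?_, fun w => ?_⟩
  · simp only [hlin]
    have h := B.repr.symm.norm_map (WithLp.toLp 2 v)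
    rw [EuclideanSpace.norm_eq, EuclideanSpace.norm_eq, Real.sqrt_inj
      (Finset.sum_nonneg fun _ _ => sq_nonneg _) (Finset.sum_nonneg fun _ _ => sq_nonneg _)] at h
    simpa using h
  · simp only [hlin]
    set w := B.repr.symm (WithLp.toLp 2 v) with hw
    have h1 : inner ℝ (B k₀) w = v k₀ := by
      rw [← B.repr_apply_apply, hw]
      simp
    have h2 : inner ℝ (B k₀) w = (∑ i, w i) / √(m : ℝ) := by
      rw [hB0, EuclideanSpace.inner_eq_star_dotProduct]
      simp [u, dotProduct, Finset.sum_mul, div_eq_mul_inv]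
    rw [h1, eq_div_iff (Real.sqrt_pos.mpr hm').ne'] at h2
    rw [← h2, mul_pow, Real.sq_sqrt hm'.le, mul_comm]
  · refine ⟨B.repr (WithLp.toLp 2 w), fun i => ?_⟩
    rw [hlin]
    simp

/-! ### Averaging over random signs -/

/-- A function that is odd under flipping the `i`-th sign sums to zero over all sign vectors. -/
lemma sum_signs_eq_zero {n : ℕ} (i : Fin n) (g : (Fin n → ℤˣ) → ℝ)
    (hg : ∀ σ, g (Function.update (1 : Fin n → ℤˣ) i (-1) * σ) = -g σ) : ∑ σ, g σ = 0 := by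
  have h := Equiv.sum_comp (Equiv.mulLeft (Function.update (1 : Fin n → ℤˣ) i (-1))) g
  simp only [Equiv.coe_mulLeft, hg, Finset.sum_neg_distrib] at h
  linarith

/-- Random signs are centred and uncorrelated, so the linear and mixed terms average out. -/
lemma sum_signs_sq {n : ℕ} (p : ℝ) (c : Fin n → ℝ) :
    ∑ σ : Fin n → ℤˣ, (p + ∑ j, ((σ j : ℤ) : ℝ) * c j) ^ 2
      = Fintype.card (Fin n → ℤˣ) * (p ^ 2 + ∑ j, c j ^ 2) := by
  have h1 : ∀ i : Fin n, ∑ σ : Fin n → ℤˣ, ((σ i : ℤ) : ℝ) = 0 := fun i =>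
    sum_signs_eq_zero i _ fun σ => by simp
  have h2 : ∀ i j : Fin n, ∑ σ : Fin n → ℤˣ, ((σ i : ℤ) : ℝ) * ((σ j : ℤ) : ℝ)
      = if i = j then (Fintype.card (Fin n → ℤˣ) : ℝ) else 0 := by
    intro i j
    split_ifs with h
    · subst h
      have : ∀ σ : Fin n → ℤˣ, ((σ i : ℤ) : ℝ) * ((σ i : ℤ) : ℝ) = 1 := by
        intro σ
        rcases Int.units_eq_one_or (σ i) with h | h <;> simp [h]
      simp [this]
    · exact sum_signs_eq_zero i _ fun σ => by simp [Function.update_of_ne (Ne.symm h)]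
  have h3 : ∀ σ : Fin n → ℤˣ, (p + ∑ j, ((σ j : ℤ) : ℝ) * c j) ^ 2
      = p ^ 2 + ∑ j, 2 * p * c j * ((σ j : ℤ) : ℝ)
        + ∑ i, ∑ j, c i * c j * (((σ i : ℤ) : ℝ) * ((σ j : ℤ) : ℝ)) := by
    intro σ
    rw [add_sq, sq (∑ j, _), Finset.sum_mul_sum, Finset.mul_sum]
    congr 1
    · congr 1
      exact Finset.sum_congr rfl fun _ _ => by ring
    · exact Finset.sum_congr rfl fun _ _ => Finset.sum_congr rfl fun _ _ => by ring
  have t1 : ∑ σ : Fin n → ℤˣ, ∑ j, 2 * p * c j * ((σ j : ℤ) : ℝ) = 0 := by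
    rw [Finset.sum_comm]
    simp only [← Finset.mul_sum, h1, mul_zero, Finset.sum_const_zero]
  have t2 : ∑ σ : Fin n → ℤˣ, ∑ i, ∑ j, c i * c j * (((σ i : ℤ) : ℝ) * ((σ j : ℤ) : ℝ))
      = Fintype.card (Fin n → ℤˣ) * ∑ j, c j ^ 2 := by
    rw [Finset.sum_comm, Finset.mul_sum]
    refine Finset.sum_congr rfl fun i _ => ?_
    rw [Finset.sum_comm]
    simp only [← Finset.mul_sum, h2]
    simp
    ring
  simp only [h3, Finset.sum_add_distrib, t1, t2]
  simp
  ring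

lemma brier_expertPred {n m : ℕ} (y : Fin (m + 1) → ℝ) (α : Fin m → Fin n → ℝ) (x : Fin n → ℝ) :
    brier y (expertPred n (m + 1) α x)
      = ∑ i : Fin m, (1 / ((m + 1 : ℕ) : ℝ) + ∑ j, α i j * x j - y i.castSucc) ^ 2
        + (1 - ∑ k : Fin m, (1 / ((m + 1 : ℕ) : ℝ) + ∑ j, α k j * x j) - y (Fin.last m)) ^ 2 := by
  rw [brier, Fin.sum_univ_castSucc]
  congr 1
  · refine Finset.sum_congr rfl fun i _ => ?_
    have h : ((i.castSucc : Fin (m + 1)) : ℕ) < m + 1 - 1 := i.2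
    simp only [expertPred, dif_pos h]
    rfl
  · have h : ¬ ((Fin.last m : Fin (m + 1)) : ℕ) < m + 1 - 1 := by simp
    simp only [expertPred, dif_neg h]
    rfl

/-- Averaged over random signs of the columns of `β`, the loss of the expert `α + β` exceeds that
of `α` by the diagonal part of the quadratic form of `β`. -/
lemma sum_signs_brier {n m : ℕ} (y : Fin (m + 1) → ℝ) (α β : Fin m → Fin n → ℝ) (x : Fin n → ℝ) :
    ∑ σ : Fin n → ℤˣ,
        brier y (expertPred n (m + 1) (fun i j => α i j + ((σ j : ℤ) : ℝ) * β i j) x)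
      = Fintype.card (Fin n → ℤˣ) * (brier y (expertPred n (m + 1) α x)
        + ∑ j, x j ^ 2 * (∑ i, β i j ^ 2 + (∑ i, β i j) ^ 2)) := by
  have e1 : ∀ (σ : Fin n → ℤˣ) (i : Fin m), 1 / ((m + 1 : ℕ) : ℝ)
      + ∑ j, (α i j + ((σ j : ℤ) : ℝ) * β i j) * x j - y i.castSucc
      = (1 / ((m + 1 : ℕ) : ℝ) + ∑ j, α i j * x j - y i.castSucc)
        + ∑ j, ((σ j : ℤ) : ℝ) * (β i j * x j) := by
    intro σ i
    simp only [add_mul, Finset.sum_add_distrib, mul_assoc]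
    ring
  have e2 : ∀ (σ : Fin n → ℤˣ), 1 - ∑ k : Fin m, (1 / ((m + 1 : ℕ) : ℝ)
      + ∑ j, (α k j + ((σ j : ℤ) : ℝ) * β k j) * x j) - y (Fin.last m)
      = (1 - ∑ k : Fin m, (1 / ((m + 1 : ℕ) : ℝ) + ∑ j, α k j * x j) - y (Fin.last m))
        + ∑ j, ((σ j : ℤ) : ℝ) * (-(∑ k, β k j) * x j) := by
    intro σ
    have : ∑ j, ((σ j : ℤ) : ℝ) * (-(∑ k, β k j) * x j)
        = -∑ k, ∑ j, ((σ j : ℤ) : ℝ) * β k j * x j := by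
      rw [Finset.sum_comm, ← Finset.sum_neg_distrib]
      refine Finset.sum_congr rfl fun j _ => ?_
      rw [← Finset.sum_mul, ← Finset.mul_sum]
      ring
    rw [this]
    simp only [add_mul, Finset.sum_add_distrib]
    ring
  simp only [brier_expertPred, e1, e2]
  rw [Finset.sum_add_distrib, Finset.sum_comm]
  simp only [sum_signs_sq]
  rw [← Finset.mul_sum, ← mul_add, Finset.sum_add_distrib]
  have e3 : ∑ j, x j ^ 2 * (∑ i, β i j ^ 2 + (∑ i, β i j) ^ 2)
      = ∑ i, ∑ j, (β i j * x j) ^ 2 + ∑ j, (-(∑ k, β k j) * x j) ^ 2 := by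
    rw [Finset.sum_comm, ← Finset.sum_add_distrib]
    refine Finset.sum_congr rfl fun j _ => ?_
    simp only [mul_pow, ← Finset.sum_mul, neg_sq]
    ring
  rw [e3]
  ring

/-! ### Gaussian mixtures of linear experts -/

/-- The expert parameter `α` with rotated coordinates `b`, i.e. `α = U b` with `b` indexed by
pairs. -/
def rotate {n m : ℕ} (U : Fin m → Fin m → ℝ) (b : Fin m × Fin n → ℝ) : Fin m → Fin n → ℝ :=
  fun i j => ∑ k, U i k * b (k, j)

/-- The regularised cumulative loss `a ‖b‖² + ∑ λ(y, ξ(U b, x))` of the expert `U b` over a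
history of pairs `(x, y)`. -/
def regLoss {n m : ℕ} (U : Fin m → Fin m → ℝ) (a : ℝ)
    (hist : List ((Fin n → ℝ) × (Fin (m + 1) → ℝ))) (b : Fin m × Fin n → ℝ) : ℝ :=
  a * ∑ i, b i ^ 2
    + (hist.map fun z => brier z.2 (expertPred n (m + 1) (rotate U b) z.1)).sum

lemma brier_nonneg {d : ℕ} (y γ : Fin d → ℝ) : 0 ≤ brier y γ :=
  Finset.sum_nonneg fun _ _ => sq_nonneg _

@[fun_prop]
lemma continuous_brier_rotate {n m : ℕ} (U : Fin m → Fin m → ℝ) (y : Fin (m + 1) → ℝ)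
    (x : Fin n → ℝ) :
    Continuous fun b => brier y (expertPred n (m + 1) (rotate U b) x) := by
  simp only [brier_expertPred, rotate]
  fun_prop

lemma continuous_regLoss {n m : ℕ} (U : Fin m → Fin m → ℝ) (a : ℝ)
    (hist : List ((Fin n → ℝ) × (Fin (m + 1) → ℝ))) : Continuous (regLoss U a hist) := by
  refine Continuous.add (by fun_prop) ?_
  induction hist with
  | nil => simpa using continuous_const
  | cons z l ih =>
    simp only [List.map_cons, List.sum_cons]
    exact (continuous_brier_rotate U z.2 z.1).add ih

lemma le_regLoss {n m : ℕ} (U : Fin m → Fin m → ℝ) (a : ℝ)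
    (hist : List ((Fin n → ℝ) × (Fin (m + 1) → ℝ))) (b : Fin m × Fin n → ℝ) :
    a * ∑ i, b i ^ 2 ≤ regLoss U a hist b := by
  have : 0 ≤ (hist.map fun z => brier z.2 (expertPred n (m + 1) (rotate U b) z.1)).sum := by
    refine List.sum_nonneg fun r hr => ?_
    obtain ⟨z, -, rfl⟩ := List.mem_map.mp hr
    exact brier_nonneg _ _
  unfold regLoss
  linarith

section Gaussian
open MeasureTheory

lemma exp_neg_sum_mul_sq {ι : Type*} [Fintype ι] (w b : ι → ℝ) :
    Real.exp (-∑ i, w i * b i ^ 2) = ∏ i, Real.exp (-w i * b i ^ 2) := by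
  rw [← Real.exp_sum, ← Finset.sum_neg_distrib]
  exact congrArg _ (Finset.sum_congr rfl fun i _ => by ring)

lemma integrable_gaussian {ι : Type*} [Fintype ι] (w : ι → ℝ) (hw : ∀ i, 0 < w i) :
    Integrable fun b : ι → ℝ => Real.exp (-∑ i, w i * b i ^ 2) := by
  simp only [exp_neg_sum_mul_sq]
  exact Integrable.fintype_prod fun i => integrable_exp_neg_mul_sq (hw i)

lemma integral_gaussian_pi {ι : Type*} [Fintype ι] (w : ι → ℝ) :
    ∫ b : ι → ℝ, Real.exp (-∑ i, w i * b i ^ 2) = ∏ i, √(Real.pi / w i) := by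
  simp only [exp_neg_sum_mul_sq]
  rw [integral_fintype_prod_volume_eq_prod fun i (z : ℝ) => Real.exp (-w i * z ^ 2)]
  exact Finset.prod_congr rfl fun i _ => integral_gaussian (w i)

lemma integrable_exp_neg {n m : ℕ} (U : Fin m → Fin m → ℝ) {a : ℝ} (ha : 0 < a)
    (hist : List ((Fin n → ℝ) × (Fin (m + 1) → ℝ)))
    (h : (Fin m × Fin n → ℝ) → ℝ) (hc : Continuous h) (h0 : ∀ b, 0 ≤ h b) :
    Integrable fun b => Real.exp (-regLoss U a hist b) * Real.exp (-h b) := by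
  have hcr := continuous_regLoss U a hist
  refine (integrable_gaussian (fun _ : Fin m × Fin n => a) fun _ => ha).mono'
    (by fun_prop) (Filter.Eventually.of_forall fun b => ?_)
  rw [← Real.exp_add, Real.norm_eq_abs, Real.abs_exp, Real.exp_le_exp, ← Finset.mul_sum]
  linarith [le_regLoss U a hist b, h0 b]

lemma measurePreserving_signs {ι : Type*} [Fintype ι] (b₀ : ι → ℝ) (s : ι → ℤˣ) :
    MeasurePreserving fun (b : ι → ℝ) i => b₀ i + ((s i : ℤ) : ℝ) * b i := by
  refine volume_preserving_pi (f := fun i (z : ℝ) => b₀ i + ((s i : ℤ) : ℝ) * z) fun i => ?_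
  have h := measurePreserving_add_left (volume : Measure ℝ) (b₀ i)
  rcases Int.units_eq_one_or (s i) with hs | hs
  · simpa [hs] using h
  · simpa [hs, Function.comp_def] using h.comp (Measure.measurePreserving_neg volume)

/-- The eigenvalues of `‖w‖² + (∑ i, w i)²` in the rotated coordinates. -/
def eig (m : ℕ) (k₀ k : Fin m) : ℝ := if k = k₀ then (m : ℝ) + 1 else 1

lemma rotate_signs {n m : ℕ} (U : Fin m → Fin m → ℝ) (b₀ b : Fin m × Fin n → ℝ)
    (σ : Fin n → ℤˣ) :
    rotate U (fun i => b₀ i + ((σ i.2 : ℤ) : ℝ) * b i)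
      = fun i j => rotate U b₀ i j + ((σ j : ℤ) : ℝ) * rotate U b i j := by
  funext i j
  simp only [rotate, Finset.mul_sum, ← Finset.sum_add_distrib]
  exact Finset.sum_congr rfl fun k _ => by ring

/-- Averaged over column signs, the regularised loss around `b₀` is at most its value at `b₀` plus
a quadratic form that is diagonal in the rotated coordinates. -/
lemma sum_signs_regLoss {n m : ℕ} (U : Fin m → Fin m → ℝ) (k₀ : Fin m)
    (hU1 : ∀ v : Fin m → ℝ, ∑ i, (∑ k, U i k * v k) ^ 2 = ∑ k, v k ^ 2)
    (hU2 : ∀ v : Fin m → ℝ, (∑ i, ∑ k, U i k * v k) ^ 2 = m * v k₀ ^ 2)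
    (a X : ℝ) (hist : List ((Fin n → ℝ) × (Fin (m + 1) → ℝ)))
    (hx : ∀ z ∈ hist, ∀ j, |z.1 j| ≤ X) (b₀ b : Fin m × Fin n → ℝ) :
    ∑ σ : Fin n → ℤˣ, regLoss U a hist (fun i => b₀ i + ((σ i.2 : ℤ) : ℝ) * b i)
      ≤ Fintype.card (Fin n → ℤˣ) * (regLoss U a hist b₀
        + ∑ i, (a + hist.length * X ^ 2 * eig m k₀ i.1) * b i ^ 2) := by
  set N : ℝ := ((Fintype.card (Fin n → ℤˣ) : ℕ) : ℝ) with hN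
  have hreg : ∑ σ : Fin n → ℤˣ, a * ∑ i, (b₀ i + ((σ i.2 : ℤ) : ℝ) * b i) ^ 2
      = N * (a * ∑ i, b₀ i ^ 2 + ∑ i, a * b i ^ 2) := by
    rw [← Finset.mul_sum, Finset.sum_comm]
    have : ∀ i : Fin m × Fin n, ∑ σ : Fin n → ℤˣ, (b₀ i + ((σ i.2 : ℤ) : ℝ) * b i) ^ 2
        = N * (b₀ i ^ 2 + b i ^ 2) := by
      intro i
      have h := sum_signs_sq (b₀ i) (Pi.single i.2 (b i))
      have e : ∀ σ : Fin n → ℤˣ, ∑ j, ((σ j : ℤ) : ℝ) * (Pi.single i.2 (b i) : Fin n → ℝ) j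
          = ((σ i.2 : ℤ) : ℝ) * b i := by
        intro σ
        rw [Finset.sum_eq_single i.2 (fun j _ hj => by simp [hj]) (by simp)]
        simp
      have e2 : ∑ j, (Pi.single i.2 (b i) : Fin n → ℝ) j ^ 2 = b i ^ 2 := by
        rw [Finset.sum_eq_single i.2 (fun j _ hj => by simp [hj]) (by simp)]
        simp
      simpa only [e, e2] using h
    simp only [this, ← Finset.mul_sum, Finset.sum_add_distrib]
    ring
  have hdiag : ∀ j : Fin n, ∑ i, rotate U b i j ^ 2 + (∑ i, rotate U b i j) ^ 2
      = ∑ k, eig m k₀ k * b (k, j) ^ 2 := by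
    intro j
    have h : ∀ k, eig m k₀ k * b (k, j) ^ 2
        = b (k, j) ^ 2 + if k = k₀ then (m : ℝ) * b (k, j) ^ 2 else 0 := by
      intro k
      unfold eig
      split_ifs <;> ring
    simp only [rotate, hU1 fun k => b (k, j), hU2 fun k => b (k, j), h, Finset.sum_add_distrib]
    simp
  have hdiag0 : ∀ j : Fin n, 0 ≤ ∑ k, eig m k₀ k * b (k, j) ^ 2 := fun j => by
    rw [← hdiag]
    exact add_nonneg (Finset.sum_nonneg fun _ _ => sq_nonneg _) (sq_nonneg _)
  have hloss : ∑ σ : Fin n → ℤˣ, (hist.map fun z => brier z.2 (expertPred n (m + 1)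
        (rotate U fun i => b₀ i + ((σ i.2 : ℤ) : ℝ) * b i) z.1)).sum
      ≤ N * ((hist.map fun z => brier z.2 (expertPred n (m + 1) (rotate U b₀) z.1)).sum
        + hist.length * (X ^ 2 * ∑ j, ∑ k, eig m k₀ k * b (k, j) ^ 2)) := by
    induction hist with
    | nil => simp
    | cons z l ih =>
      have ih' := ih fun z hz => hx z (List.mem_cons_of_mem _ hz)
      simp only [List.map_cons, List.sum_cons, List.length_cons, Finset.sum_add_distrib]
      have h1 : ∑ σ : Fin n → ℤˣ, brier z.2 (expertPred n (m + 1)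
          (rotate U fun i => b₀ i + ((σ i.2 : ℤ) : ℝ) * b i) z.1)
          ≤ N * (brier z.2 (expertPred n (m + 1) (rotate U b₀) z.1)
            + X ^ 2 * ∑ j, ∑ k, eig m k₀ k * b (k, j) ^ 2) := by
        simp only [rotate_signs, sum_signs_brier, hdiag]
        refine mul_le_mul_of_nonneg_left (add_le_add le_rfl ?_) (by positivity)
        rw [Finset.mul_sum]
        refine Finset.sum_le_sum fun j _ => mul_le_mul_of_nonneg_right ?_ (hdiag0 j)
        exact sq_le_sq' (abs_le.mp (hx z List.mem_cons_self j)).1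
          (abs_le.mp (hx z List.mem_cons_self j)).2
      push_cast
      linarith
  have hfin : ∑ i : Fin m × Fin n, (a + hist.length * X ^ 2 * eig m k₀ i.1) * b i ^ 2
      = ∑ i, a * b i ^ 2 + hist.length * (X ^ 2 * ∑ j, ∑ k, eig m k₀ k * b (k, j) ^ 2) := by
    rw [Finset.sum_comm, ← Fintype.sum_prod_type' (f := fun k j => eig m k₀ k * b (k, j) ^ 2),
      ← mul_assoc, Finset.mul_sum, ← Finset.sum_add_distrib]
    exact Finset.sum_congr rfl fun i _ => by ring
  simp only [regLoss]
  rw [hfin, Finset.sum_add_distrib, hreg]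
  exact (add_le_add le_rfl hloss).trans (le_of_eq (by ring))

/-- Laplace-type lower bound for the total weight of the experts.  The symmetrisation over signs,
followed by Jensen's inequality for `exp`, plays the role of Hadamard's determinant inequality. -/
lemma total_weight_ge {n m : ℕ} (U : Fin m → Fin m → ℝ) (k₀ : Fin m)
    (hU1 : ∀ v : Fin m → ℝ, ∑ i, (∑ k, U i k * v k) ^ 2 = ∑ k, v k ^ 2)
    (hU2 : ∀ v : Fin m → ℝ, (∑ i, ∑ k, U i k * v k) ^ 2 = m * v k₀ ^ 2)
    {a : ℝ} (ha : 0 < a) (X : ℝ) (hist : List ((Fin n → ℝ) × (Fin (m + 1) → ℝ)))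
    (hx : ∀ z ∈ hist, ∀ j, |z.1 j| ≤ X) (b₀ : Fin m × Fin n → ℝ) :
    Real.exp (-regLoss U a hist b₀)
        * ∏ i : Fin m × Fin n, √(Real.pi / (a + hist.length * X ^ 2 * eig m k₀ i.1))
      ≤ ∫ b, Real.exp (-regLoss U a hist b) := by
  set N : ℝ := ((Fintype.card (Fin n → ℤˣ) : ℕ) : ℝ) with hN
  have hNpos : 0 < N := by rw [hN]; exact_mod_cast Fintype.card_pos
  set w : Fin m × Fin n → ℝ := fun i => a + hist.length * X ^ 2 * eig m k₀ i.1 with hw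
  have hwpos : ∀ i, 0 < w i := by
    intro i
    have : 0 ≤ eig m k₀ i.1 := by unfold eig; split_ifs <;> positivity
    simp only [hw]
    positivity
  have hcont : Continuous fun b => Real.exp (-regLoss U a hist b) :=
    (continuous_regLoss U a hist).neg.rexp
  have hint : Integrable fun b => Real.exp (-regLoss U a hist b) := by
    simpa using integrable_exp_neg U ha hist (fun _ => 0) continuous_const fun _ => le_rfl
  have hmp : ∀ σ : Fin n → ℤˣ, MeasurePreserving
      fun (b : Fin m × Fin n → ℝ) i => b₀ i + ((σ i.2 : ℤ) : ℝ) * b i :=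
    fun σ => measurePreserving_signs b₀ fun i => σ i.2
  have hinv : ∀ σ : Fin n → ℤˣ,
      ∫ b : Fin m × Fin n → ℝ, Real.exp (-regLoss U a hist fun i => b₀ i + ((σ i.2 : ℤ) : ℝ) * b i)
        = ∫ b, Real.exp (-regLoss U a hist b) := by
    intro σ
    conv_rhs => rw [← (hmp σ).map_eq]
    exact (integral_map (hmp σ).aemeasurable hcont.aestronglyMeasurable).symm
  have hjensen : ∀ b : Fin m × Fin n → ℝ,
      N * (Real.exp (-regLoss U a hist b₀) * Real.exp (-∑ i, w i * b i ^ 2))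
        ≤ ∑ σ : Fin n → ℤˣ,
          Real.exp (-regLoss U a hist fun i => b₀ i + ((σ i.2 : ℤ) : ℝ) * b i) := by
    intro b
    set M := regLoss U a hist b₀ + ∑ i, w i * b i ^ 2 with hM
    have hsum := sum_signs_regLoss U k₀ hU1 hU2 a X hist hx b₀ b
    rw [← Real.exp_add, ← neg_add, ← hM]
    -- tangent line of `exp` at `-M`
    calc N * Real.exp (-M) ≤ ∑ σ : Fin n → ℤˣ, Real.exp (-M)
          * (M - regLoss U a hist (fun i => b₀ i + ((σ i.2 : ℤ) : ℝ) * b i) + 1) := by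
          rw [← Finset.mul_sum, mul_comm]
          refine mul_le_mul_of_nonneg_left ?_ (Real.exp_pos _).le
          rw [Finset.sum_add_distrib, Finset.sum_sub_distrib]
          simp only [Finset.sum_const, Finset.card_univ, nsmul_eq_mul, mul_one]
          linarith
      _ ≤ _ := by
          refine Finset.sum_le_sum fun σ _ => ?_
          refine (mul_le_mul_of_nonneg_left (Real.add_one_le_exp _) (Real.exp_pos _).le).trans ?_
          rw [← Real.exp_add]
          exact Real.exp_le_exp.mpr (by linarith)
  have h := integral_mono
    (((integrable_gaussian w hwpos).const_mul (Real.exp (-regLoss U a hist b₀))).const_mul N)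
    (integrable_finsetSum Finset.univ fun σ _ => (hmp σ).integrable_comp_of_integrable hint)
    hjensen
  rw [integral_const_mul, integral_const_mul, integral_gaussian_pi] at h
  rw [integral_finsetSum _ fun σ _ => (hmp σ).integrable_comp_of_integrable hint] at h
  simp only [Function.comp_def, hinv, Finset.sum_const, Finset.card_univ, nsmul_eq_mul] at h
  exact le_of_mul_le_mul_left h hNpos

end Gaussian

/-! ### The regret bound -/

/-- Closed form of the half log-determinant: one eigenvalue `m + 1` and `m - 1` eigenvalues `1`,
each with multiplicity `n`. -/
lemma sum_log_eig {n m : ℕ} (k₀ : Fin m) (a c : ℝ) :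
    ∑ i : Fin m × Fin n, Real.log (c * eig m k₀ i.1 / a + 1)
      = n * ((m : ℝ) - 1) * Real.log (c / a + 1) + n * Real.log (c * ((m : ℝ) + 1) / a + 1) := by
  rw [Fintype.sum_prod_type]
  have h : ∀ k : Fin m, Real.log (c * eig m k₀ k / a + 1) = Real.log (c / a + 1)
      + if k = k₀ then Real.log (c * ((m : ℝ) + 1) / a + 1) - Real.log (c / a + 1) else 0 := by
    intro k
    unfold eig
    split_ifs <;> simp
  simp only [h, Finset.sum_const, Finset.card_univ, Fintype.card_fin, nsmul_eq_mul,
    ← Finset.mul_sum, Finset.sum_add_distrib]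
  simp only [Finset.sum_ite_eq', Finset.mem_univ, if_true]
  ring

open MeasureTheory in
/-- The regret bound with `d = m + 1`.  The strategy applies the substitution function of
`mixability` to the exponentially weighted Gaussian mixture of all linear experts, parametrised in
the coordinates of `exists_rotation`, in which the final Gaussian integral is a product. -/
lemma regret_bound {n m : ℕ} (hm : 0 < m) {a : ℝ} (ha : 0 < a) :
    ∃ S : List ((Fin n → ℝ) × (Fin (m + 1) → ℝ)) → (Fin n → ℝ) → (Fin (m + 1) → ℝ),
      (∀ hist x, S hist x ∈ probSimplex (m + 1)) ∧
      ∀ (X : ℝ) (T : ℕ) (x : ℕ → Fin n → ℝ) (y : ℕ → Fin (m + 1) → ℝ),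
        (∀ t < T, ∀ j, |x t j| ≤ X) → (∀ t < T, y t ∈ probSimplex (m + 1)) →
        ∀ α : Fin m → Fin n → ℝ,
          ∑ t ∈ Finset.range T, brier (y t) (S (List.ofFn fun s : Fin t => (x s, y s)) (x t))
            ≤ ∑ t ∈ Finset.range T, brier (y t) (expertPred n (m + 1) α (x t))
              + a * (∑ i, ∑ j, (α i j) ^ 2)
              + (n : ℝ) * ((m : ℝ) - 1) / 2 * Real.log ((T : ℝ) * X ^ 2 / a + 1)
              + (n : ℝ) / 2 * Real.log ((T : ℝ) * X ^ 2 * ((m : ℝ) + 1) / a + 1) := by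
  obtain ⟨U, k₀, hU1, hU2, hU3⟩ := exists_rotation hm
  have hstep : ∀ (hist : List ((Fin n → ℝ) × (Fin (m + 1) → ℝ))) (x : Fin n → ℝ),
      ∃ γ ∈ probSimplex (m + 1), ∀ y ∈ probSimplex (m + 1),
        Real.exp (brier y γ) * ∫ b, Real.exp (-regLoss U a hist b)
            * Real.exp (-brier y (expertPred n (m + 1) (rotate U b) x))
          ≤ ∫ b, Real.exp (-regLoss U a hist b) := by
    intro hist x
    have hint : Integrable fun b => Real.exp (-regLoss U a hist b) := by
      simpa using integrable_exp_neg U ha hist (fun _ => 0) continuous_const fun _ => le_rfl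
    exact mixability (Nat.succ_pos m) volume (fun b => Real.exp (-regLoss U a hist b))
      (fun b => expertPred n (m + 1) (rotate U b) x) (fun _ => Real.exp_pos _)
      (integral_exp_pos hint)
      fun y => integrable_exp_neg U ha hist _ (continuous_brier_rotate U y x)
        fun b => brier_nonneg _ _
  choose S hS hSle using hstep
  refine ⟨S, hS, fun X T x y hx hy α => ?_⟩
  set H : ℕ → List ((Fin n → ℝ) × (Fin (m + 1) → ℝ)) :=
    fun t => List.ofFn fun s : Fin t => (x s, y s) with hH
  have hreg : ∀ t b, regLoss U a (H t) b = a * ∑ i, b i ^ 2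
      + ∑ s ∈ Finset.range t, brier (y s) (expertPred n (m + 1) (rotate U b) (x s)) := by
    intro t b
    simp only [regLoss, hH, List.map_ofFn, List.sum_ofFn, Function.comp_def]
    rw [Finset.sum_range fun s => brier (y s) (expertPred n (m + 1) (rotate U b) (x s))]
  set W : ℕ → ℝ := fun t => ∫ b, Real.exp (-regLoss U a (H t) b) with hW
  have hind : ∀ t ≤ T,
      Real.exp (∑ s ∈ Finset.range t, brier (y s) (S (H s) (x s))) * W t ≤ W 0 := by
    intro t
    induction t with
    | zero => simp
    | succ t ih =>
      intro ht
      refine le_trans ?_ (ih (by omega))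
      rw [Finset.sum_range_succ, Real.exp_add, mul_assoc]
      refine mul_le_mul_of_nonneg_left ?_ (Real.exp_pos _).le
      have h := hSle (H t) (x t) (y t) (hy t (by omega))
      have e : ∀ b, Real.exp (-regLoss U a (H (t + 1)) b) = Real.exp (-regLoss U a (H t) b)
          * Real.exp (-brier (y t) (expertPred n (m + 1) (rotate U b) (x t))) := by
        intro b
        rw [← Real.exp_add, hreg, hreg, Finset.sum_range_succ]
        congr 1
        ring
      simp only [hW, e]
      exact h
  have hW0 : W 0 = ∏ _i : Fin m × Fin n, √(Real.pi / a) := by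
    rw [← integral_gaussian_pi]
    simp only [hW, hreg, Finset.range_zero, Finset.sum_empty, add_zero, Finset.mul_sum]
  choose v hv using fun j => hU3 fun i => α i j
  set b₀ : Fin m × Fin n → ℝ := fun i => v i.2 i.1 with hb₀
  have hrot : rotate U b₀ = α := by
    funext i j
    exact hv j i
  have hnorm : ∑ i, b₀ i ^ 2 = ∑ i, ∑ j, α i j ^ 2 := by
    rw [Finset.sum_comm, Fintype.sum_prod_type_right]
    refine Finset.sum_congr rfl fun j _ => ?_
    simp only [hb₀, ← hU1 (v j), hv]
  have hlow := total_weight_ge U k₀ hU1 hU2 ha X (H T) (by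
    intro z hz j
    obtain ⟨s, rfl⟩ := List.mem_ofFn.mp hz
    exact hx s s.2 j) b₀
  have hlen : (H T).length = T := by simp [hH]
  rw [hlen] at hlow
  have hmain := (mul_le_mul_of_nonneg_left hlow (Real.exp_pos _).le).trans (hind T le_rfl)
  set c : ℝ := T * X ^ 2 with hc
  have hc0 : 0 ≤ c := by positivity
  have hwpos : ∀ i : Fin m × Fin n, 0 < a + c * eig m k₀ i.1 := by
    intro i
    have : 0 ≤ eig m k₀ i.1 := by unfold eig; split_ifs <;> positivity
    positivity
  have hπ := Real.pi_pos
  have hsq : ∀ i : Fin m × Fin n, 0 < √(Real.pi / (a + c * eig m k₀ i.1)) :=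
    fun i => Real.sqrt_pos.mpr (div_pos hπ (hwpos i))
  have hprod := Finset.prod_pos (s := Finset.univ) fun i _ => hsq i
  have hlog := Real.log_le_log (by positivity) hmain
  rw [Real.log_mul (Real.exp_pos _).ne' (by positivity),
    Real.log_mul (Real.exp_pos _).ne' hprod.ne', Real.log_exp, Real.log_exp, hW0,
    Real.log_prod (fun i _ => (hsq i).ne'),
    Real.log_prod (fun _ _ => (Real.sqrt_pos.mpr (div_pos hπ ha)).ne')] at hlog
  have hterm : ∀ i : Fin m × Fin n, Real.log (√(Real.pi / a))
      = Real.log (√(Real.pi / (a + c * eig m k₀ i.1)))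
        + Real.log (c * eig m k₀ i.1 / a + 1) / 2 := by
    intro i
    have e : c * eig m k₀ i.1 / a + 1 = (a + c * eig m k₀ i.1) / a := by
      field_simp
      ring
    rw [e, Real.log_sqrt (div_pos hπ ha).le, Real.log_sqrt (div_pos hπ (hwpos i)).le,
      Real.log_div hπ.ne' ha.ne', Real.log_div hπ.ne' (hwpos i).ne',
      Real.log_div (hwpos i).ne' ha.ne']
    ring
  rw [Finset.sum_congr rfl fun i _ => hterm i, Finset.sum_add_distrib, ← Finset.sum_div,
    sum_log_eig, hreg, hrot, hnorm] at hlog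
  linarith

/-- Improved theoretical bound for mAAR(a): regret at most
a‖α‖² + (n(d-2)/2)·ln(TX²/a+1) + (n/2)·ln(TX²d/a+1). -/
theorem mAAR_improved_bound (n d : ℕ) (hn : 1 ≤ n) (hd : 2 ≤ d) (a : ℝ) (ha : 0 < a) :
    ∃ S : List ((Fin n → ℝ) × (Fin d → ℝ)) → (Fin n → ℝ) → (Fin d → ℝ),
      (∀ hist x, S hist x ∈ probSimplex d) ∧
      ∀ X : ℝ, 0 < X → ∀ T : ℕ, 1 ≤ T →
        ∀ (x : ℕ → Fin n → ℝ) (y : ℕ → Fin d → ℝ),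
          (∀ t < T, ∀ j, |x t j| ≤ X) →
          (∀ t < T, y t ∈ probSimplex d) →
          ∀ α : Fin (d - 1) → Fin n → ℝ,
            ∑ t ∈ Finset.range T,
                brier (y t) (S (List.ofFn fun s : Fin t => (x s, y s)) (x t))
              ≤ ∑ t ∈ Finset.range T, brier (y t) (expertPred n d α (x t))
                + a * (∑ i, ∑ j, (α i j) ^ 2)
                + (n : ℝ) * ((d : ℝ) - 2) / 2 * Real.log ((T : ℝ) * X ^ 2 / a + 1)
                + (n : ℝ) / 2 * Real.log ((T : ℝ) * X ^ 2 * (d : ℝ) / a + 1) := by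
  obtain ⟨m, rfl⟩ : ∃ m, d = m + 1 := ⟨d - 1, by omega⟩
  obtain ⟨S, hS, hbound⟩ := regret_bound (n := n) (m := m) (by omega) ha
  refine ⟨S, hS, fun X _ T _ x y hx hy α => (hbound X T x y hx hy α).trans (le_of_eq ?_)⟩
  have e : ((m + 1 : ℕ) : ℝ) - 2 = (m : ℝ) - 1 := by push_cast; ring
  rw [e, Nat.cast_succ]
  rfl
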